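/- arXiv:2508.11556 — 2 statements merged into one kernel-verified Lean document; each statement's English description precedes it below -/
import Mathlib

section
/- Let W ∈ ℝ^{d_w×T} and suppose there exists, for some integer d⊥ ≥ 1, a matrix W⊥ ∈ {−1,0,1}^{T×d⊥} with W W⊥ = 0. Let μ be a probability measure on ℝ^{d_x×T} (the distribution of the covariate matrix X) such that for every nonzero b ∈ ℝ^{d_x}, the set {x ∈ ℝ^{d_x×T} : bᵀ x W⊥ = 0} has μ-measure strictly less than 1. Let β, β̃ ∈ ℝ^{d_x}, and let ν and ν̃ be measurable families (Markov kernels) assigning to each x ∈ ℝ^{d_x×T} probability measures ν_x and ν̃_x on ℝ^{d_w}. If for μ-almost every x and every y ∈ {0,1}^T one has ∫ P_{β,a}(y | x) dν_x(a) = ∫ P_{β̃,a}(y | x) dν̃_x(a), then β = β̃. -/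
open MeasureTheory ProbabilityTheory

/-- The static logit probability of outcome `y ∈ {0,1}^T`:
`P_{β,a}(y | x) = ∏_t exp(y_t (x_tᵀβ + w_tᵀa)) / (1 + exp(x_tᵀβ + w_tᵀa))`. -/
noncomputable def staticLogitP {T dw dx : ℕ}
    (w : Fin T → Fin dw → ℝ) (x : Fin T → Fin dx → ℝ)
    (β : Fin dx → ℝ) (a : Fin dw → ℝ) (y : Fin T → ℝ) : ℝ :=
  ∏ t, Real.exp (y t * ((∑ i, x t i * β i) + ∑ k, w t k * a k)) /
      (1 + Real.exp ((∑ i, x t i * β i) + ∑ k, w t k * a k))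

/-!
If `∑ t, (y t - z t) w_t = 0`, then the factor `exp (∑ t, (y t - z t) * w_tᵀa)` of the ratio
`P_{β,a}(y | x) / P_{β,a}(z | x)` is `1`. The ratio is therefore the same for all fixed effects
`a`, it survives mixing over `a`, and the mixed probabilities of `y` and `z` determine
`∑ t, (y t - z t) * x_tᵀβ`. As the entries of `W⊥` lie in `{-1, 0, 1}`, the positive and negative
parts of each of its columns form such a pair of binary outcomes, so the mixed probabilities
determine `βᵀ x W⊥`.
-/

theorem exists_binary_sub_eq {ι R : Type*} [Ring R] [LinearOrder R] [IsOrderedRing R]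
    (d : ι → R) (hd : ∀ t, d t = -1 ∨ d t = 0 ∨ d t = 1) :
    ∃ y z : ι → R, (∀ t, y t = 0 ∨ y t = 1) ∧ (∀ t, z t = 0 ∨ z t = 1) ∧
      ∀ t, y t - z t = d t := by
  refine ⟨fun t => (d t)⁺, fun t => (d t)⁻, fun t => ?_, fun t => ?_,
    fun t => posPart_sub_negPart (d t)⟩ <;>
  rcases hd t with h | h | h <;> simp [h]

theorem exp_mul_le_one_add_exp {p : ℝ} (hp : p ∈ Set.Icc 0 1) (u : ℝ) :
    Real.exp (p * u) ≤ 1 + Real.exp u := by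
  rcases le_total u 0 with hu | hu
  · have : Real.exp (p * u) ≤ 1 := Real.exp_le_one_iff.2 (mul_nonpos_of_nonneg_of_nonpos hp.1 hu)
    linarith [Real.exp_pos u]
  · have : Real.exp (p * u) ≤ Real.exp u := Real.exp_le_exp.2 (mul_le_of_le_one_left hu hp.2)
    linarith

section StaticLogit

variable {T dw dx : ℕ} (w : Fin T → Fin dw → ℝ) (x : Fin T → Fin dx → ℝ) (β : Fin dx → ℝ)

theorem staticLogitP_pos (a : Fin dw → ℝ) (y : Fin T → ℝ) : 0 < staticLogitP w x β a y :=
  Finset.prod_pos fun _ _ => by positivity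

theorem staticLogitP_le_one (a : Fin dw → ℝ) {y : Fin T → ℝ} (hy : ∀ t, y t ∈ Set.Icc 0 1) :
    staticLogitP w x β a y ≤ 1 :=
  Finset.prod_le_one (fun _ _ => by positivity) fun t _ =>
    div_le_one_of_le₀ (exp_mul_le_one_add_exp (hy t) _) (by positivity)

theorem continuous_staticLogitP (y : Fin T → ℝ) : Continuous fun a => staticLogitP w x β a y :=
  continuous_finsetProd _ fun _ _ => by fun_prop (disch := intros; positivity)

theorem integrable_staticLogitP {y : Fin T → ℝ} (hy : ∀ t, y t ∈ Set.Icc 0 1)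
    (ρ : Measure (Fin dw → ℝ)) [IsFiniteMeasure ρ] :
    Integrable (fun a => staticLogitP w x β a y) ρ := by
  refine .of_bound (continuous_staticLogitP w x β y).aestronglyMeasurable 1 (.of_forall fun a => ?_)
  rw [Real.norm_of_nonneg (staticLogitP_pos w x β a y).le]
  exact staticLogitP_le_one w x β a hy

theorem integral_staticLogitP_pos {y : Fin T → ℝ} (hy : ∀ t, y t ∈ Set.Icc 0 1)
    (ρ : Measure (Fin dw → ℝ)) [IsFiniteMeasure ρ] [NeZero ρ] :
    0 < ∫ a, staticLogitP w x β a y ∂ρ := by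
  have hsupp : (Function.support fun a => staticLogitP w x β a y) = Set.univ :=
    Set.eq_univ_of_forall fun a => (staticLogitP_pos w x β a y).ne'
  rw [integral_pos_iff_support_of_nonneg (fun a => (staticLogitP_pos w x β a y).le)
    (integrable_staticLogitP w x β hy ρ), hsupp]
  exact NeZero.pos _

theorem staticLogitP_eq_exp_mul (a : Fin dw → ℝ) (y z : Fin T → ℝ) :
    staticLogitP w x β a y =
      Real.exp (∑ t, (y t - z t) * ((∑ i, x t i * β i) + ∑ k, w t k * a k)) *
        staticLogitP w x β a z := by
  unfold staticLogitP
  rw [Real.exp_sum, ← Finset.prod_mul_distrib]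
  refine Finset.prod_congr rfl fun t _ => ?_
  rw [← mul_div_assoc, ← Real.exp_add, ← add_mul, sub_add_cancel]

variable {w} {y z : Fin T → ℝ}

theorem staticLogitP_eq_exp_mul_of_orthogonal (horth : ∀ j, ∑ t, w t j * (y t - z t) = 0)
    (a : Fin dw → ℝ) :
    staticLogitP w x β a y =
      Real.exp (∑ t, (y t - z t) * ∑ i, x t i * β i) * staticLogitP w x β a z := by
  have hw : ∑ t, (y t - z t) * ∑ k, w t k * a k = 0 :=
    calc ∑ t, (y t - z t) * ∑ k, w t k * a k = ∑ k, (∑ t, w t k * (y t - z t)) * a k := by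
          simp only [Finset.mul_sum, Finset.sum_mul]
          rw [Finset.sum_comm]
          exact Finset.sum_congr rfl fun _ _ => Finset.sum_congr rfl fun _ _ => by ring
      _ = 0 := by simp only [horth, zero_mul, Finset.sum_const_zero]
  rw [staticLogitP_eq_exp_mul w x β a y z]
  simp only [mul_add, Finset.sum_add_distrib, hw, add_zero]

theorem integral_staticLogitP_eq_exp_mul_of_orthogonal
    (horth : ∀ j, ∑ t, w t j * (y t - z t) = 0) (ρ : Measure (Fin dw → ℝ)) :
    ∫ a, staticLogitP w x β a y ∂ρ =
      Real.exp (∑ t, (y t - z t) * ∑ i, x t i * β i) * ∫ a, staticLogitP w x β a z ∂ρ := by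
  simp only [staticLogitP_eq_exp_mul_of_orthogonal x β horth, integral_const_mul]

theorem sum_sub_mul_index_eq_of_integral_staticLogitP_eq {β' : Fin dx → ℝ}
    (horth : ∀ j, ∑ t, w t j * (y t - z t) = 0) (hz : ∀ t, z t ∈ Set.Icc 0 1)
    {ρ ρ' : Measure (Fin dw → ℝ)} [IsFiniteMeasure ρ] [NeZero ρ]
    (hPy : ∫ a, staticLogitP w x β a y ∂ρ = ∫ a, staticLogitP w x β' a y ∂ρ')
    (hPz : ∫ a, staticLogitP w x β a z ∂ρ = ∫ a, staticLogitP w x β' a z ∂ρ') :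
    ∑ t, (y t - z t) * ∑ i, x t i * β i = ∑ t, (y t - z t) * ∑ i, x t i * β' i := by
  rw [integral_staticLogitP_eq_exp_mul_of_orthogonal x β horth,
    integral_staticLogitP_eq_exp_mul_of_orthogonal x β' horth, ← hPz] at hPy
  exact Real.exp_injective (mul_right_cancel₀ (integral_staticLogitP_pos w x β hz ρ).ne' hPy)

theorem sum_index_sub_mul_eq_zero_of_integral_staticLogitP_eq {β β' : Fin dx → ℝ} {d : Fin T → ℝ}
    (hd : ∀ t, d t = -1 ∨ d t = 0 ∨ d t = 1) (horth : ∀ j, ∑ t, w t j * d t = 0)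
    {ρ ρ' : Measure (Fin dw → ℝ)} [IsFiniteMeasure ρ] [NeZero ρ]
    (hP : ∀ y : Fin T → ℝ, (∀ t, y t = 0 ∨ y t = 1) →
      ∫ a, staticLogitP w x β a y ∂ρ = ∫ a, staticLogitP w x β' a y ∂ρ') :
    ∑ t, (∑ i, (β - β') i * x t i) * d t = 0 := by
  obtain ⟨y, z, hy, hz, hyz⟩ := exists_binary_sub_eq d hd
  have hz' : ∀ t, z t ∈ Set.Icc 0 1 := fun t => by rcases hz t with h | h <;> simp [h]
  have hindex := sum_sub_mul_index_eq_of_integral_staticLogitP_eq x β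
    (by simpa only [hyz] using horth) hz' (hP y hy) (hP z hz)
  simp only [hyz] at hindex
  calc ∑ t, (∑ i, (β - β') i * x t i) * d t
      = ∑ t, d t * ∑ i, x t i * β i - ∑ t, d t * ∑ i, x t i * β' i := by
        simp only [Pi.sub_apply, mul_comm, mul_sub, Finset.sum_sub_distrib]
    _ = 0 := sub_eq_zero.2 hindex

end StaticLogit

theorem stmt3_general {T dw dx : ℕ} {ι : Type*}
    (w : Fin T → Fin dw → ℝ) (Wp : Fin T → ι → ℝ)
    (hWp : ∀ t k, Wp t k = -1 ∨ Wp t k = 0 ∨ Wp t k = 1)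
    (horth : ∀ j k, ∑ t, w t j * Wp t k = 0)
    (μ : Measure (Fin T → Fin dx → ℝ))
    (hμ : ∀ b : Fin dx → ℝ, b ≠ 0 → ¬ ∀ᵐ x ∂μ, ∀ k, ∑ t, (∑ i, b i * x t i) * Wp t k = 0)
    (β β' : Fin dx → ℝ)
    (ν ν' : (Fin T → Fin dx → ℝ) → Measure (Fin dw → ℝ))
    [∀ x, IsFiniteMeasure (ν x)] [∀ x, NeZero (ν x)]
    (h : ∀ᵐ x ∂μ, ∀ y : Fin T → ℝ, (∀ t, y t = 0 ∨ y t = 1) →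
      ∫ a, staticLogitP w x β a y ∂(ν x) = ∫ a, staticLogitP w x β' a y ∂(ν' x)) :
    β = β' := by
  by_contra hne
  refine hμ (β - β') (sub_ne_zero.2 hne) ?_
  filter_upwards [h] with x hx k
  exact sum_index_sub_mul_eq_zero_of_integral_staticLogitP_eq x (hWp · k) (horth · k) hx

/-- Suppose `W W⊥ = 0` for some matrix `W⊥ ∈ {-1,0,1}^{T × d⊥}`
(`d⊥ ≥ 1`), and let `μ` be a probability distribution of the covariates such that for
every nonzero `b ∈ ℝ^{d_x}`, the set `{x : bᵀ x W⊥ = 0}` has `μ`-measure `< 1`.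
If the mixtures of the logit probabilities over Markov kernels `ν, ν̃` agree for
`μ`-almost every `x` and every binary outcome `y`, then `β = β̃`. -/
theorem stmt3 {T dw dx dp : ℕ} (hT : 1 ≤ T) (hdw : 1 ≤ dw) (hdx : 1 ≤ dx) (hdp : 1 ≤ dp)
    (w : Fin T → Fin dw → ℝ) (Wp : Fin T → Fin dp → ℝ)
    (hWp : ∀ t k, Wp t k = -1 ∨ Wp t k = 0 ∨ Wp t k = 1)
    (horth : ∀ j k, ∑ t, w t j * Wp t k = 0)
    (μ : Measure (Fin T → Fin dx → ℝ)) [IsProbabilityMeasure μ]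
    (hμ : ∀ b : Fin dx → ℝ, b ≠ 0 →
      μ {x | ∀ k, ∑ t, (∑ i, b i * x t i) * Wp t k = 0} < 1)
    (β β' : Fin dx → ℝ)
    (ν ν' : Kernel (Fin T → Fin dx → ℝ) (Fin dw → ℝ))
    [IsMarkovKernel ν] [IsMarkovKernel ν']
    (h : ∀ᵐ x ∂μ, ∀ y : Fin T → ℝ, (∀ t, y t = 0 ∨ y t = 1) →
      ∫ a, staticLogitP w x β a y ∂(ν x) = ∫ a, staticLogitP w x β' a y ∂(ν' x)) :
    β = β' :=
  stmt3_general w Wp hWp horth μ (fun b hb hae => (hμ b hb).ne <|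
    (measure_congr (Filter.eventuallyEq_univ.2 hae)).trans measure_univ) β β' ν ν' h
end

section
/- Suppose each weight vector w_t (t = 1,…,T) is a standard basis vector in ℝ^{d_w}, y_0 ∈ {0,1} is fixed, and there exist y, ỹ ∈ {0,1}^T (with ỹ_0 := y_0) satisfying Σ_{t=1}^T w_t y_t = Σ_{t=1}^T w_t ỹ_t, Σ_{t=1}^T w_t y_{t−1} = Σ_{t=1}^T w_t ỹ_{t−1}, and Σ_{t=1}^T y_t y_{t−1} ≠ Σ_{t=1}^T ỹ_t ỹ_{t−1}. Then the autoregressive parameter is identified: for any γ, γ̃ ∈ ℝ and any probability measures μ, μ̃ on ℝ^{d_w}, if ∫ P_{γ,a}(y′) dμ(a) = ∫ P_{γ̃,a}(y′) dμ̃(a) for every y′ ∈ {0,1}^T, then γ = γ̃. -/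
open MeasureTheory

/-- The lagged outcome `y_{t-1}` (with fixed initial value `y₀` at `t = 1`),
0-indexed in `t`. -/
def ylag {T : ℕ} (y0 : ℝ) (y : Fin T → ℝ) (t : Fin T) : ℝ :=
  if t.val = 0 then y0
  else y ⟨t.val - 1, lt_of_le_of_lt (Nat.sub_le _ _) t.isLt⟩

/-- The AR(1) logit probability of `y ∈ {0,1}^T` given `A = a`:
`P_{γ,a}(y) = ∏_t exp(y_t (γ y_{t-1} + w_tᵀa)) / (1 + exp(γ y_{t-1} + w_tᵀa))`. -/
noncomputable def ar1P {T dw : ℕ} (γ : ℝ) (y0 : ℝ)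
    (w : Fin T → Fin dw → ℝ) (a : Fin dw → ℝ) (y : Fin T → ℝ) : ℝ :=
  ∏ t, Real.exp (y t * (γ * ylag y0 y t + ∑ k, w t k * a k)) /
      (1 + Real.exp (γ * ylag y0 y t + ∑ k, w t k * a k))

/-!
The logarithm of `P_{γ,a}(y)` is
`γ ∑ y_t y_{t-1} + aᵀ ∑ y_t w_t - ∑ log (1 + exp (γ y_{t-1} + w_tᵀa))`.
The first lag is common to all outcome sequences, the later ones are binary, and every function on
`{0,1}` is affine; so the last sum depends on `y` only through the sum of the lags over each set of
periods with the same weight vector. For standard basis weights these are the coordinates of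
`∑ w_t y_{t-1}`. When they and `∑ w_t y_t` agree for `y` and `y'`, the ratio
`P_{γ,a}(y) / P_{γ,a}(y') = exp (γ (∑ y_t y_{t-1} - ∑ y'_t y'_{t-1}))` does not involve `a`, hence
is inherited by the mixed probabilities, which thus determine `γ`.
-/

theorem sum_mul_comp_eq_of_sum_fiber_eq {ι κ R : Type*} [Fintype ι] [DecidableEq κ]
    [NonUnitalNonAssocSemiring R] {u v : ι → R} {w : ι → κ}
    (h : ∀ c, ∑ i with w i = c, u i = ∑ i with w i = c, v i) (g : κ → R) :
    ∑ i, u i * g (w i) = ∑ i, v i * g (w i) := by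
  have group (x : ι → R) :
      ∑ i, x i * g (w i) = ∑ c ∈ Finset.univ.image w, (∑ i with w i = c, x i) * g c := by
    rw [← Finset.sum_fiberwise_of_maps_to fun i _ => Finset.mem_image_of_mem w (Finset.mem_univ i)]
    refine Finset.sum_congr rfl fun c _ => ?_
    rw [Finset.sum_mul]
    refine Finset.sum_congr rfl fun i hi => ?_
    rw [(Finset.mem_filter.mp hi).2]
  simp only [group, h]

theorem sum_fiber_eq_of_sum_single_mul_eq {ι κ R : Type*} [Fintype ι] [DecidableEq κ]
    [NonAssocSemiring R] [Nontrivial R] [DecidableEq (κ → R)] {u v : ι → R} {w : ι → κ → R}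
    (hw : ∀ i, ∃ j, w i = Pi.single j 1) (h : ∀ k, ∑ i, w i k * u i = ∑ i, w i k * v i)
    (c : κ → R) : ∑ i with w i = c, u i = ∑ i with w i = c, v i := by
  by_cases hc : ∃ k, c = Pi.single k 1
  · obtain ⟨k, rfl⟩ := hc
    have fiber (x : ι → R) : ∑ i with w i = Pi.single k 1, x i = ∑ i, w i k * x i := by
      rw [Finset.sum_filter]
      refine Finset.sum_congr rfl fun i _ => ?_
      obtain ⟨j, hj⟩ := hw i
      rcases eq_or_ne j k with rfl | hjk
      · simp [hj]
      · have hne : w i ≠ Pi.single k 1 := fun hk => by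
          simpa [hj, hjk.symm] using congrFun hk k
        rw [if_neg hne, hj, Pi.single_eq_of_ne hjk.symm, zero_mul]
    rw [fiber, fiber, h]
  · have hempty : ({i | w i = c} : Finset ι) = ∅ := Finset.filter_false_of_mem fun i _ hi =>
      hc ((hw i).imp fun j hj => hi.symm.trans hj)
    rw [hempty, Finset.sum_empty, Finset.sum_empty]

section Lag

variable {T : ℕ} {y0 : ℝ} {y y' : Fin T → ℝ}

theorem apply_ylag_sub_apply_ylag (hy : ∀ t, y t = 0 ∨ y t = 1)
    (hy' : ∀ t, y' t = 0 ∨ y' t = 1) (f : ℝ → ℝ) (t : Fin T) :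
    f (ylag y0 y t) - f (ylag y0 y' t) = (ylag y0 y t - ylag y0 y' t) * (f 1 - f 0) := by
  by_cases ht : t.val = 0
  · simp only [ylag, ht, if_true, sub_self, zero_mul]
  · simp only [ylag, ht, if_false]
    rcases hy ⟨t.val - 1, _⟩ with h | h <;> rcases hy' ⟨t.val - 1, _⟩ with h' | h' <;>
      rw [h, h'] <;> ring

theorem sum_apply_ylag_eq_of_sum_fiber_eq {κ : Type*} [DecidableEq κ] {w : Fin T → κ}
    (hy : ∀ t, y t = 0 ∨ y t = 1) (hy' : ∀ t, y' t = 0 ∨ y' t = 1)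
    (hlag : ∀ v, ∑ t with w t = v, ylag y0 y t = ∑ t with w t = v, ylag y0 y' t)
    (f : κ → ℝ → ℝ) :
    ∑ t, f (w t) (ylag y0 y t) = ∑ t, f (w t) (ylag y0 y' t) := by
  rw [← sub_eq_zero, ← Finset.sum_sub_distrib]
  calc ∑ t, (f (w t) (ylag y0 y t) - f (w t) (ylag y0 y' t))
      = ∑ t, (ylag y0 y t - ylag y0 y' t) * (f (w t) 1 - f (w t) 0) :=
        Finset.sum_congr rfl fun t _ => apply_ylag_sub_apply_ylag hy hy' (f (w t)) t
    _ = 0 := by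
        simp only [sub_mul _ _ (f _ 1 - f _ 0), Finset.sum_sub_distrib]
        exact sub_eq_zero.mpr (sum_mul_comp_eq_of_sum_fiber_eq hlag fun v => f v 1 - f v 0)

end Lag

section Probability

variable {T dw : ℕ} (γ y0 : ℝ) (w : Fin T → Fin dw → ℝ)

theorem ar1P_pos (a : Fin dw → ℝ) (y : Fin T → ℝ) : 0 < ar1P γ y0 w a y :=
  Finset.prod_pos fun _ _ => by positivity

theorem ar1P_le_one (a : Fin dw → ℝ) {y : Fin T → ℝ} (hy : ∀ t, y t = 0 ∨ y t = 1) :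
    ar1P γ y0 w a y ≤ 1 := by
  refine Finset.prod_le_one (fun t _ => by positivity) fun t _ => ?_
  rw [div_le_one (by positivity)]
  rcases hy t with h | h <;> simp [h, Real.exp_nonneg]

theorem continuous_ar1P (y : Fin T → ℝ) : Continuous fun a => ar1P γ y0 w a y :=
  continuous_finsetProd _ fun _ _ =>
    Continuous.div (by fun_prop) (by fun_prop) fun _ => by positivity

theorem integrable_ar1P (μ : Measure (Fin dw → ℝ)) [IsFiniteMeasure μ] {y : Fin T → ℝ}
    (hy : ∀ t, y t = 0 ∨ y t = 1) : Integrable (fun a => ar1P γ y0 w a y) μ := by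
  refine .of_bound (continuous_ar1P γ y0 w y).aestronglyMeasurable 1 (.of_forall fun a => ?_)
  rw [Real.norm_of_nonneg (ar1P_pos γ y0 w a y).le]
  exact ar1P_le_one γ y0 w a hy

theorem integral_ar1P_pos (μ : Measure (Fin dw → ℝ)) [IsFiniteMeasure μ] [NeZero μ]
    {y : Fin T → ℝ} (hy : ∀ t, y t = 0 ∨ y t = 1) : 0 < ∫ a, ar1P γ y0 w a y ∂μ := by
  have hexp : (fun a => ar1P γ y0 w a y) = fun a => Real.exp (Real.log (ar1P γ y0 w a y)) :=
    funext fun a => (Real.exp_log (ar1P_pos γ y0 w a y)).symm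
  have hint := integrable_ar1P γ y0 w μ hy
  rw [hexp] at hint ⊢
  exact integral_exp_pos hint

theorem log_ar1P (a : Fin dw → ℝ) (y : Fin T → ℝ) :
    Real.log (ar1P γ y0 w a y) =
      γ * ∑ t, y t * ylag y0 y t + ∑ k, (∑ t, w t k * y t) * a k
        - ∑ t, Real.log (1 + Real.exp (γ * ylag y0 y t + ∑ k, w t k * a k)) := by
  have hfactor (t : Fin T) :
      Real.log (Real.exp (y t * (γ * ylag y0 y t + ∑ k, w t k * a k)) /
          (1 + Real.exp (γ * ylag y0 y t + ∑ k, w t k * a k))) =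
        γ * (y t * ylag y0 y t) + ∑ k, w t k * y t * a k
          - Real.log (1 + Real.exp (γ * ylag y0 y t + ∑ k, w t k * a k)) := by
    rw [Real.log_div (by positivity) (by positivity), Real.log_exp, mul_add, Finset.mul_sum]
    congr 2
    · ring
    · exact Finset.sum_congr rfl fun k _ => by ring
  rw [ar1P, Real.log_prod fun t _ => by positivity]
  simp only [hfactor, Finset.sum_sub_distrib, Finset.sum_add_distrib, Finset.mul_sum,
    Finset.sum_mul]
  rw [Finset.sum_comm (f := fun t k => w t k * y t * a k)]

end Probability

section Identification

variable {T dw : ℕ} {y0 : ℝ} {w : Fin T → Fin dw → ℝ} {y y' : Fin T → ℝ}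

theorem ar1P_eq_exp_mul_ar1P (hy : ∀ t, y t = 0 ∨ y t = 1) (hy' : ∀ t, y' t = 0 ∨ y' t = 1)
    (hsum : ∀ k, ∑ t, w t k * y t = ∑ t, w t k * y' t)
    (hlag : ∀ v, ∑ t with w t = v, ylag y0 y t = ∑ t with w t = v, ylag y0 y' t)
    (γ : ℝ) (a : Fin dw → ℝ) :
    ar1P γ y0 w a y =
      Real.exp (γ * (∑ t, y t * ylag y0 y t - ∑ t, y' t * ylag y0 y' t)) *
        ar1P γ y0 w a y' := by
  have hden := sum_apply_ylag_eq_of_sum_fiber_eq hy hy' hlag fun v l =>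
    Real.log (1 + Real.exp (γ * l + ∑ k, v k * a k))
  have hlog : Real.log (ar1P γ y0 w a y) =
      γ * (∑ t, y t * ylag y0 y t - ∑ t, y' t * ylag y0 y' t)
        + Real.log (ar1P γ y0 w a y') := by
    simp only [log_ar1P, hsum, hden]
    ring
  rw [← Real.exp_log (ar1P_pos γ y0 w a y), hlog, Real.exp_add,
    Real.exp_log (ar1P_pos γ y0 w a y')]

theorem log_integral_ar1P_sub_log_integral_ar1P (hy : ∀ t, y t = 0 ∨ y t = 1)
    (hy' : ∀ t, y' t = 0 ∨ y' t = 1) (hsum : ∀ k, ∑ t, w t k * y t = ∑ t, w t k * y' t)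
    (hlag : ∀ v, ∑ t with w t = v, ylag y0 y t = ∑ t with w t = v, ylag y0 y' t)
    (γ : ℝ) (μ : Measure (Fin dw → ℝ)) [IsFiniteMeasure μ] [NeZero μ] :
    Real.log (∫ a, ar1P γ y0 w a y ∂μ) - Real.log (∫ a, ar1P γ y0 w a y' ∂μ) =
      γ * (∑ t, y t * ylag y0 y t - ∑ t, y' t * ylag y0 y' t) := by
  simp only [ar1P_eq_exp_mul_ar1P hy hy' hsum hlag, integral_const_mul]
  rw [Real.log_mul (Real.exp_ne_zero _) (integral_ar1P_pos γ y0 w μ hy').ne', Real.log_exp,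
    add_sub_cancel_right]

theorem stmt7_general (hy : ∀ t, y t = 0 ∨ y t = 1) (hy' : ∀ t, y' t = 0 ∨ y' t = 1)
    (hsum : ∀ k, ∑ t, w t k * y t = ∑ t, w t k * y' t)
    (hlag : ∀ v, ∑ t with w t = v, ylag y0 y t = ∑ t with w t = v, ylag y0 y' t)
    (hne : ∑ t, y t * ylag y0 y t ≠ ∑ t, y' t * ylag y0 y' t)
    {γ γ' : ℝ} {μ μ' : Measure (Fin dw → ℝ)} [IsFiniteMeasure μ] [NeZero μ]
    [IsFiniteMeasure μ'] [NeZero μ']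
    (h : ∫ a, ar1P γ y0 w a y ∂μ = ∫ a, ar1P γ' y0 w a y ∂μ')
    (h' : ∫ a, ar1P γ y0 w a y' ∂μ = ∫ a, ar1P γ' y0 w a y' ∂μ') :
    γ = γ' := by
  refine mul_right_cancel₀ (sub_ne_zero.mpr hne) ?_
  rw [← log_integral_ar1P_sub_log_integral_ar1P hy hy' hsum hlag γ μ, h, h',
    log_integral_ar1P_sub_log_integral_ar1P hy hy' hsum hlag γ' μ']

end Identification

/-- Suppose each `w_t` is a standard basis vector of `ℝ^{d_w}`, the
initial condition `y₀ ∈ {0,1}` is fixed, and there exist binary sequences `y, y'`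
satisfying `Σ_t w_t y_t = Σ_t w_t y'_t`, `Σ_t w_t y_{t-1} = Σ_t w_t y'_{t-1}`, and
`Σ_t y_t y_{t-1} ≠ Σ_t y'_t y'_{t-1}`. Then the autoregressive parameter is
identified: for any `γ, γ'` and any probability measures `μ, μ'` on `ℝ^{d_w}`, if the
mixed probabilities agree for every binary outcome sequence, then `γ = γ'`. -/
theorem stmt7 {T dw : ℕ} (hT : 1 ≤ T) (hdw : 1 ≤ dw)
    (w : Fin T → Fin dw → ℝ)
    (hw : ∀ t, ∃ j : Fin dw, w t = Pi.single j 1)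
    (y0 : ℝ) (hy0 : y0 = 0 ∨ y0 = 1)
    (hex : ∃ y y' : Fin T → ℝ,
      (∀ t, y t = 0 ∨ y t = 1) ∧ (∀ t, y' t = 0 ∨ y' t = 1) ∧
      (∀ k, ∑ t, w t k * y t = ∑ t, w t k * y' t) ∧
      (∀ k, ∑ t, w t k * ylag y0 y t = ∑ t, w t k * ylag y0 y' t) ∧
      ∑ t, y t * ylag y0 y t ≠ ∑ t, y' t * ylag y0 y' t)
    (γ γ' : ℝ) (μ μ' : Measure (Fin dw → ℝ))
    (hμ : IsProbabilityMeasure μ) (hμ' : IsProbabilityMeasure μ')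
    (h : ∀ y' : Fin T → ℝ, (∀ t, y' t = 0 ∨ y' t = 1) →
      ∫ a, ar1P γ y0 w a y' ∂μ = ∫ a, ar1P γ' y0 w a y' ∂μ') :
    γ = γ' := by
  obtain ⟨y, y', hy, hy', hsum, hlag, hne⟩ := hex
  exact stmt7_general hy hy' hsum (sum_fiber_eq_of_sum_single_mul_eq hw hlag) hne
    (h y hy) (h y' hy')
end
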